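/- arXiv:1804.09847 — 2 statements merged into one kernel-verified Lean document; each statement's English description precedes it below -/
import Mathlib

section
/- For large M, the function field Mertens estimate holds: -Σ_{deg P ≤ M} ln(1 - 1/|P|) = ln M + γ + 1/(2M) + O(1/M²), where the sum is over monic irreducible polynomials P of F_q[T] of degree at most M, |P| = q^{deg P}, and γ is the Euler–Mascheroni constant. -/
open Polynomial

/-! Write `q = #F` and `|P| = q ^ deg P`. Expand `-log (1 - 1 / |P|) = ∑ k ≥ 1, |P| ^ (-k) / k` and
keep only the terms with `k * deg P ≤ M`. Those with `k * deg P = n` add up to `q ^ (-n) / n` times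
the sum of `deg P` over the primes `P` whose degree divides `n`; this sum is `q ^ n`, because
`X ^ q ^ n - X` is the product of these primes. Hence the truncated double sum is exactly the
harmonic number `H_M`. For each degree `d ≤ M` the discarded terms contribute at most
`2 * q ^ (-d * ⌊M / d⌋) ≤ 2 * 2 ^ (-M / 2) = O(1 / M ^ 3)`, hence `O(1 / M ^ 2)` in total. Finally
`H_M = log M + γ + 1 / (2 M) + O(1 / M ^ 2)`, by comparing `∫ dt / t` over `[n, n + 1]` with its
trapezoid and midpoint approximations. -/

open Filter Finset Topology UniqueFactorizationMonoid
open scoped Nat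

lemma succ_pow_le_factorial_mul_two_pow (n k : ℕ) : (n + 1) ^ k ≤ k ! * 2 ^ (n + k) := by
  calc (n + 1) ^ k ≤ (n + 1).ascFactorial k := Nat.pow_succ_le_ascFactorial _ _
    _ = k ! * (n + k).choose k := Nat.ascFactorial_eq_factorial_mul_choose _ _
    _ ≤ k ! * 2 ^ (n + k) := by gcongr; exact Nat.choose_le_two_pow _ _

lemma le_two_mul_mul_div {d M : ℕ} (hd : d ≠ 0) (hdM : d ≤ M) : M ≤ 2 * (d * (M / d)) := by
  have hlt : M < d * (M / d + 1) := Nat.lt_mul_div_succ M (Nat.pos_of_ne_zero hd)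
  have hle : d * 1 ≤ d * (M / d) := by gcongr; exact (Nat.one_le_div_iff (by lia)).2 hdM
  lia

lemma cube_le_mul_pow_mul_div {q d M : ℕ} (hq : 2 ≤ q) (hd : d ≠ 0) (hdM : d ≤ M) :
    M ^ 3 ≤ 384 * q ^ (d * (M / d)) := by
  set a := d * (M / d)
  calc M ^ 3 ≤ (2 * (a + 1)) ^ 3 := by gcongr; have := le_two_mul_mul_div hd hdM; lia
    _ = 8 * (a + 1) ^ 3 := by ring
    _ ≤ 8 * (3 ! * 2 ^ (a + 3)) := by gcongr; exact succ_pow_le_factorial_mul_two_pow a 3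
    _ = 384 * 2 ^ a := by norm_num [Nat.factorial]; ring
    _ ≤ 384 * q ^ a := by gcongr

lemma sum_Icc_filter_dvd {A : Type*} [AddCommMonoid A] {d : ℕ} (hd : d ≠ 0) (M : ℕ) (f : ℕ → A) :
    ∑ n ∈ Icc 1 M with d ∣ n, f n = ∑ k ∈ range (M / d), f (d * (k + 1)) := by
  have hd' : 0 < d := Nat.pos_of_ne_zero hd
  symm
  refine sum_nbij (fun k ↦ d * (k + 1)) (fun k hk ↦ ?_) (fun k _ l _ h ↦ ?_) (fun n hn ↦ ?_)
    fun _ _ ↦ rfl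
  · rw [mem_range, Nat.lt_iff_add_one_le, Nat.le_div_iff_mul_le hd', mul_comm] at hk
    simp only [mem_filter, mem_Icc]
    exact ⟨⟨Nat.mul_pos hd' k.succ_pos, hk⟩, dvd_mul_right _ _⟩
  · simpa [hd] using h
  · simp only [coe_filter, mem_Icc, Set.mem_ofPred_eq] at hn
    obtain ⟨⟨hpos, hle⟩, c, rfl⟩ := hn
    obtain ⟨k, rfl⟩ := Nat.exists_eq_succ_of_ne_zero (Nat.pos_of_mul_pos_left hpos).ne'
    refine ⟨k, ?_, rfl⟩
    rw [coe_range, Set.mem_Iio, Nat.lt_iff_add_one_le, Nat.le_div_iff_mul_le hd', mul_comm]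
    exact hle

lemma log_add_one_sub_log_le_trapezoid {x : ℝ} (hx : 0 < x) :
    Real.log (x + 1) - Real.log x ≤ (1 / x + 1 / (x + 1)) / 2 := by
  have hlog : 0 ≤ Real.log ((x + 1) / x) := Real.log_nonneg <| by rw [one_le_div hx]; linarith
  rw [← Real.log_div (by positivity) hx.ne']
  calc Real.log ((x + 1) / x) ≤ Real.sinh (Real.log ((x + 1) / x)) := Real.self_le_sinh_iff.2 hlog
    _ = ((x + 1) / x - ((x + 1) / x)⁻¹) / 2 := Real.sinh_log (by positivity)
    _ = (1 / x + 1 / (x + 1)) / 2 := by field_simp; ring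

lemma midpoint_le_log_add_one_sub_log {x : ℝ} (hx : 0 < x) :
    2 / (2 * x + 1) ≤ Real.log (x + 1) - Real.log x := by
  rw [← Real.log_div (by positivity) hx.ne']
  calc 2 / (2 * x + 1) = 2 * (1 / x) / (1 / x + 2) := by field_simp; ring
    _ ≤ Real.log (1 + 1 / x) := Real.le_log_one_add_of_nonneg (by positivity)
    _ = Real.log ((x + 1) / x) := by rw [add_div, div_self hx.ne']

lemma trapezoid_sub_midpoint_le {x : ℝ} (hx : 0 < x) :
    (1 / x + 1 / (x + 1)) / 2 - 2 / (2 * x + 1) ≤ (1 / x ^ 2 - 1 / (x + 1) ^ 2) / 8 := by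
  have hdiff : (1 / x ^ 2 - 1 / (x + 1) ^ 2) / 8 - ((1 / x + 1 / (x + 1)) / 2 - 2 / (2 * x + 1)) =
      1 / (8 * x ^ 2 * (x + 1) ^ 2 * (2 * x + 1)) := by
    field_simp
    ring
  have hpos : 0 ≤ 1 / (8 * x ^ 2 * (x + 1) ^ 2 * (2 * x + 1)) := by positivity
  linarith

/-- The sequence `H_n - log n - 1 / (2 n)`, which converges to the Euler–Mascheroni constant faster
than `Real.eulerMascheroniSeq'`; its value at `0` is the junk value `0`. -/
noncomputable def harmonicSubLogSubHalfInv (n : ℕ) : ℝ := harmonic n - Real.log n - 1 / (2 * n)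

lemma tendsto_harmonicSubLogSubHalfInv :
    Tendsto harmonicSubLogSubHalfInv atTop (𝓝 Real.eulerMascheroniConstant) := by
  have hinv : Tendsto (fun n : ℕ ↦ 1 / (2 * (n : ℝ))) atTop (𝓝 0) := by
    simpa only [div_div, pow_one] using tendsto_const_div_pow (1 / 2) 1 one_ne_zero
  exact sub_zero Real.eulerMascheroniConstant ▸ Real.tendsto_harmonic_sub_log.sub hinv

lemma harmonicSubLogSubHalfInv_succ_sub {n : ℕ} (hn : n ≠ 0) :
    harmonicSubLogSubHalfInv (n + 1) - harmonicSubLogSubHalfInv n =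
      (1 / (n : ℝ) + 1 / ((n : ℝ) + 1)) / 2 - (Real.log (n + 1) - Real.log n) := by
  simp only [harmonicSubLogSubHalfInv, harmonic_succ]
  push_cast
  field_simp
  ring

lemma monotoneOn_harmonicSubLogSubHalfInv : MonotoneOn harmonicSubLogSubHalfInv {n | 1 ≤ n} := by
  refine monotoneOn_nat_Ici_of_le_succ fun n hn ↦ ?_
  have hn' : (0 : ℝ) < n := by exact_mod_cast hn
  linarith [harmonicSubLogSubHalfInv_succ_sub (Nat.ne_of_gt hn),
    log_add_one_sub_log_le_trapezoid hn']

lemma antitoneOn_harmonicSubLogSubHalfInv_add :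
    AntitoneOn (fun n ↦ harmonicSubLogSubHalfInv n + 1 / 8 / (n : ℝ) ^ 2) {n | 1 ≤ n} := by
  refine antitoneOn_nat_Ici_of_succ_le fun n hn ↦ ?_
  have hn' : (0 : ℝ) < n := by exact_mod_cast hn
  simp only [div_right_comm (1 : ℝ) 8]
  push_cast
  linarith [harmonicSubLogSubHalfInv_succ_sub (Nat.ne_of_gt hn),
    midpoint_le_log_add_one_sub_log hn', trapezoid_sub_midpoint_le hn']

lemma abs_harmonic_sub_log_add_eulerMascheroniConstant_add_le {n : ℕ} (hn : n ≠ 0) :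
    |(harmonic n : ℝ) - (Real.log n + Real.eulerMascheroniConstant + 1 / (2 * n))|
      ≤ 1 / 8 / (n : ℝ) ^ 2 := by
  have hn' : 1 ≤ n := Nat.one_le_iff_ne_zero.2 hn
  have hle : harmonicSubLogSubHalfInv n ≤ Real.eulerMascheroniConstant :=
    ge_of_tendsto tendsto_harmonicSubLogSubHalfInv <| (eventually_ge_atTop n).mono fun m hm ↦
      monotoneOn_harmonicSubLogSubHalfInv hn' (hn'.trans hm) hm
  have hge : Real.eulerMascheroniConstant ≤ harmonicSubLogSubHalfInv n + 1 / 8 / (n : ℝ) ^ 2 := by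
    have hlim := tendsto_harmonicSubLogSubHalfInv.add (tendsto_const_div_pow (1 / 8) 2 two_ne_zero)
    rw [add_zero] at hlim
    exact le_of_tendsto hlim <| (eventually_ge_atTop n).mono fun m hm ↦
      antitoneOn_harmonicSubLogSubHalfInv_add hn' (hn'.trans hm) hm
  unfold harmonicSubLogSubHalfInv at hle hge
  refine abs_le.2 ⟨by linarith, le_trans ?_ (by positivity : 0 ≤ 1 / 8 / (n : ℝ) ^ 2)⟩
  linarith

lemma abs_sum_range_add_log_one_sub_le {x : ℝ} (hx : |x| ≤ 1 / 2) (n : ℕ) :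
    |∑ k ∈ range n, x ^ (k + 1) / ((k : ℝ) + 1) + Real.log (1 - x)| ≤ 2 * |x| ^ (n + 1) := by
  refine (Real.abs_log_sub_add_sum_range_le (by linarith) n).trans ?_
  rw [div_le_iff₀ (by linarith)]
  have hpow : 0 ≤ |x| ^ (n + 1) := by positivity
  nlinarith

section Field

variable {K : Type*} [Field K] [DecidableEq K]

lemma mem_primeFactors_iff_monic {f : K[X]} (hf : f ≠ 0) {P : K[X]} :
    P ∈ primeFactors f ↔ P.Monic ∧ Irreducible P ∧ P ∣ f := by
  rw [mem_primeFactors, Polynomial.mem_normalizedFactors_iff hf, and_left_comm]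

lemma sum_natDegree_primeFactors_of_squarefree {f : K[X]} (hf : Squarefree f) :
    ∑ P ∈ primeFactors f, P.natDegree = f.natDegree := by
  calc ∑ P ∈ primeFactors f, P.natDegree
      = ((normalizedFactors f).map natDegree).sum := by
        rw [Finset.sum, primeFactors_val_eq_normalizedFactors hf.isRadical]
    _ = (normalizedFactors f).prod.natDegree :=
        (natDegree_multiset_prod _ (zero_notMem_normalizedFactors f)).symm
    _ = f.natDegree := natDegree_eq_of_degree_eq <|
        degree_eq_degree_of_associated (prod_normalizedFactors hf.ne_zero)

end Field

section FiniteField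

variable (F : Type*) [Field F] [Finite F]

lemma squarefree_X_pow_card_pow_sub_X {n : ℕ} (hn : n ≠ 0) :
    Squarefree (X ^ Nat.card F ^ n - X : F[X]) := by
  have := Fintype.ofFinite F
  obtain ⟨p, hp⟩ := CharP.exists F
  have hdvd : p ∣ Nat.card F := by
    rw [← CharP.cast_eq_zero_iff F p, Nat.card_eq_fintype_card, FiniteField.cast_card_eq_zero]
  exact (galois_poly_separable p _ (hdvd.trans (dvd_pow_self _ hn))).squarefree

lemma mem_primeFactors_X_pow_card_pow_sub_X [DecidableEq F] {n : ℕ} (hn : n ≠ 0) {P : F[X]} :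
    P ∈ primeFactors (X ^ Nat.card F ^ n - X) ↔ P.Monic ∧ Irreducible P ∧ P.natDegree ∣ n := by
  rw [mem_primeFactors_iff_monic (squarefree_X_pow_card_pow_sub_X F hn).ne_zero]
  exact and_congr_right fun _ ↦ and_congr_right fun h ↦
    h.natDegree_dvd_iff_dvd_X_pow_card_pow_sub_X.symm

lemma finite_setOf_monic_irreducible_natDegree_le (M : ℕ) :
    {P : F[X] | P.Monic ∧ Irreducible P ∧ P.natDegree ≤ M}.Finite := by
  classical
  exact (primeFactors (X ^ Nat.card F ^ (M !) - X : F[X])).finite_toSet.subset fun _ hP ↦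
    (mem_primeFactors_X_pow_card_pow_sub_X F M.factorial_ne_zero).2
      ⟨hP.1, hP.2.1, Nat.dvd_factorial hP.2.1.natDegree_pos hP.2.2⟩

/-- The primes of `F[X]` of degree at most `M`, each represented by its monic generator, as a finset
over which sums can be manipulated. -/
noncomputable def monicIrreduciblesLE (M : ℕ) : Finset F[X] :=
  (finite_setOf_monic_irreducible_natDegree_le F M).toFinset

variable {F}

lemma mem_monicIrreduciblesLE {M : ℕ} {P : F[X]} :
    P ∈ monicIrreduciblesLE F M ↔ P.Monic ∧ Irreducible P ∧ P.natDegree ≤ M :=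
  Set.Finite.mem_toFinset _

lemma sum_natDegree_filter_dvd_monicIrreduciblesLE {n M : ℕ} (hn : n ≠ 0) (hnM : n ≤ M) :
    ∑ P ∈ monicIrreduciblesLE F M with P.natDegree ∣ n, P.natDegree = Nat.card F ^ n := by
  classical
  have hfilter : {P ∈ monicIrreduciblesLE F M | P.natDegree ∣ n} =
      primeFactors (X ^ Nat.card F ^ n - X) := by
    ext P
    rw [mem_filter, mem_monicIrreduciblesLE, mem_primeFactors_X_pow_card_pow_sub_X F hn]
    have hle : P.natDegree ∣ n → P.natDegree ≤ M := fun h ↦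
      (Nat.le_of_dvd (Nat.pos_of_ne_zero hn) h).trans hnM
    tauto
  rw [hfilter, sum_natDegree_primeFactors_of_squarefree (squarefree_X_pow_card_pow_sub_X F hn),
    FiniteField.X_pow_card_pow_sub_X_natDegree_eq F hn Finite.one_lt_card]

lemma card_filter_natDegree_eq_monicIrreduciblesLE_le {d M : ℕ} (hd : d ≠ 0) (hdM : d ≤ M) :
    #{P ∈ monicIrreduciblesLE F M | P.natDegree = d} ≤ Nat.card F ^ d := by
  calc #{P ∈ monicIrreduciblesLE F M | P.natDegree = d}
      = ∑ P ∈ monicIrreduciblesLE F M with P.natDegree = d, 1 := card_eq_sum_ones _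
    _ ≤ ∑ P ∈ monicIrreduciblesLE F M with P.natDegree = d, P.natDegree :=
        sum_le_sum fun P hP ↦ by grind
    _ ≤ ∑ P ∈ monicIrreduciblesLE F M with P.natDegree ∣ d, P.natDegree :=
        sum_le_sum_of_subset (monotone_filter_right _ fun P _ h ↦ dvd_of_eq h)
    _ = Nat.card F ^ d := sum_natDegree_filter_dvd_monicIrreduciblesLE hd hdM

variable (F)

lemma sum_monicIrreduciblesLE_truncated_log_series (M : ℕ) :
    ∑ P ∈ monicIrreduciblesLE F M, ∑ k ∈ range (M / P.natDegree),
      (1 / (Nat.card F : ℝ) ^ P.natDegree) ^ (k + 1) / ((k : ℝ) + 1) = harmonic M := by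
  set q : ℝ := (Nat.card F : ℝ) with hq
  have hq0 : 0 < q := Nat.cast_pos.2 Nat.card_pos
  have hseries : ∀ P ∈ monicIrreduciblesLE F M,
      ∑ k ∈ range (M / P.natDegree), (1 / q ^ P.natDegree) ^ (k + 1) / ((k : ℝ) + 1) =
        ∑ n ∈ Icc 1 M, if P.natDegree ∣ n then P.natDegree * (1 / (q ^ n * n)) else 0 := by
    intro P hP
    have hd : P.natDegree ≠ 0 := (mem_monicIrreduciblesLE.1 hP).2.1.natDegree_pos.ne'
    rw [← sum_filter, sum_Icc_filter_dvd hd]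
    refine sum_congr rfl fun k _ ↦ ?_
    push_cast
    rw [pow_mul, one_div_pow]
    field_simp
  have hcoeff : ∀ n ∈ Icc 1 M,
      ∑ P ∈ monicIrreduciblesLE F M,
        (if P.natDegree ∣ n then P.natDegree * (1 / (q ^ n * n)) else 0) = (n : ℝ)⁻¹ := by
    intro n hn
    obtain ⟨hn1, hnM⟩ := mem_Icc.1 hn
    rw [← sum_filter, ← sum_mul, ← Nat.cast_sum,
      sum_natDegree_filter_dvd_monicIrreduciblesLE (Nat.ne_of_gt hn1) hnM, Nat.cast_pow, ← hq]
    field_simp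
  rw [sum_congr rfl hseries, sum_comm, sum_congr rfl hcoeff, harmonic_eq_sum_Icc]
  push_cast
  rfl

lemma sum_monicIrreduciblesLE_pow_div_add_one_le {M : ℕ} (hM : M ≠ 0) :
    ∑ P ∈ monicIrreduciblesLE F M,
      (1 / (Nat.card F : ℝ) ^ P.natDegree) ^ (M / P.natDegree + 1) ≤ 384 / (M : ℝ) ^ 2 := by
  set q : ℝ := (Nat.card F : ℝ) with hq
  have hq0 : 0 < q := Nat.cast_pos.2 Nat.card_pos
  have hfiber : ∀ d ∈ Icc 1 M, ∑ P ∈ monicIrreduciblesLE F M with P.natDegree = d,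
      (1 / q ^ P.natDegree) ^ (M / P.natDegree + 1) ≤ 384 / (M : ℝ) ^ 3 := by
    intro d hd
    obtain ⟨hd1, hdM⟩ := mem_Icc.1 hd
    have hd0 : d ≠ 0 := Nat.ne_of_gt hd1
    calc ∑ P ∈ monicIrreduciblesLE F M with P.natDegree = d,
          (1 / q ^ P.natDegree) ^ (M / P.natDegree + 1)
        ≤ #{P ∈ monicIrreduciblesLE F M | P.natDegree = d} • (1 / q ^ d) ^ (M / d + 1) :=
          sum_le_card_nsmul _ _ _ fun P hP ↦ by rw [(mem_filter.1 hP).2]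
      _ ≤ q ^ d * (1 / q ^ d) ^ (M / d + 1) := by
          rw [nsmul_eq_mul, hq]
          gcongr
          exact_mod_cast card_filter_natDegree_eq_monicIrreduciblesLE_le hd0 hdM
      _ = 1 / q ^ (d * (M / d)) := by
          rw [pow_mul, one_div_pow, pow_succ]
          field_simp
      _ ≤ 384 / (M : ℝ) ^ 3 := by
          rw [div_le_div_iff₀ (by positivity) (by positivity), one_mul, hq]
          exact_mod_cast cube_le_mul_pow_mul_div Finite.one_lt_card hd0 hdM
  have hmaps : ∀ P ∈ monicIrreduciblesLE F M, P.natDegree ∈ Icc 1 M := fun P hP ↦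
    have ⟨_, hirr, hle⟩ := mem_monicIrreduciblesLE.1 hP
    mem_Icc.2 ⟨hirr.natDegree_pos, hle⟩
  calc ∑ P ∈ monicIrreduciblesLE F M, (1 / q ^ P.natDegree) ^ (M / P.natDegree + 1)
      = ∑ d ∈ Icc 1 M, ∑ P ∈ monicIrreduciblesLE F M with P.natDegree = d,
          (1 / q ^ P.natDegree) ^ (M / P.natDegree + 1) := (sum_fiberwise_of_maps_to hmaps _).symm
    _ ≤ #(Icc 1 M) • (384 / (M : ℝ) ^ 3) := sum_le_card_nsmul _ _ _ hfiber
    _ = 384 / (M : ℝ) ^ 2 := by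
        rw [Nat.card_Icc, nsmul_eq_mul, Nat.add_sub_cancel]
        field_simp

lemma abs_harmonic_add_sum_monicIrreduciblesLE_log_le {M : ℕ} (hM : M ≠ 0) :
    |(harmonic M : ℝ) + ∑ P ∈ monicIrreduciblesLE F M,
      Real.log (1 - 1 / (Nat.card F : ℝ) ^ P.natDegree)| ≤ 768 / (M : ℝ) ^ 2 := by
  have hnorm : ∀ P ∈ monicIrreduciblesLE F M, |1 / (Nat.card F : ℝ) ^ P.natDegree| ≤ 1 / 2 := by
    intro P hP
    have hd : P.natDegree ≠ 0 := (mem_monicIrreduciblesLE.1 hP).2.1.natDegree_pos.ne'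
    have hle : 2 ≤ Nat.card F ^ P.natDegree := Nat.one_lt_pow hd Finite.one_lt_card
    rw [abs_of_nonneg (by positivity)]
    exact one_div_le_one_div_of_le two_pos (by exact_mod_cast hle)
  rw [← sum_monicIrreduciblesLE_truncated_log_series F M, ← sum_add_distrib]
  calc _ ≤ ∑ P ∈ monicIrreduciblesLE F M,
          2 * |1 / (Nat.card F : ℝ) ^ P.natDegree| ^ (M / P.natDegree + 1) :=
        (abs_sum_le_sum_abs _ _).trans <| sum_le_sum fun P hP ↦
          abs_sum_range_add_log_one_sub_le (hnorm P hP) _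
    _ = 2 * ∑ P ∈ monicIrreduciblesLE F M,
          (1 / (Nat.card F : ℝ) ^ P.natDegree) ^ (M / P.natDegree + 1) := by
        rw [mul_sum]
        exact sum_congr rfl fun P _ ↦ by rw [abs_of_nonneg (by positivity)]
    _ ≤ 2 * (384 / (M : ℝ) ^ 2) := by
        gcongr
        exact sum_monicIrreduciblesLE_pow_div_add_one_le F hM
    _ = 768 / (M : ℝ) ^ 2 := by ring

theorem mertens_function_field_general {M : ℕ} (hM : M ≠ 0) :
    |(-∑ᶠ P ∈ {P : F[X] | P.Monic ∧ Irreducible P ∧ P.natDegree ≤ M},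
          Real.log (1 - 1 / (Nat.card F : ℝ) ^ P.natDegree))
        - (Real.log M + Real.eulerMascheroniConstant + 1 / (2 * M))|
      ≤ 769 / (M : ℝ) ^ 2 := by
  rw [finsum_mem_eq_finite_toFinset_sum _ (finite_setOf_monic_irreducible_natDegree_le F M),
    ← monicIrreduciblesLE]
  set S := ∑ P ∈ monicIrreduciblesLE F M, Real.log (1 - 1 / (Nat.card F : ℝ) ^ P.natDegree)
  set L := Real.log M + Real.eulerMascheroniConstant + 1 / (2 * M)
  calc |-S - L| = |((harmonic M : ℝ) - L) - (harmonic M + S)| := by ring_nf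
    _ ≤ |(harmonic M : ℝ) - L| + |harmonic M + S| := abs_sub _ _
    _ ≤ 1 / 8 / (M : ℝ) ^ 2 + 768 / (M : ℝ) ^ 2 :=
        add_le_add (abs_harmonic_sub_log_add_eulerMascheroniConstant_add_le hM)
          (abs_harmonic_add_sum_monicIrreduciblesLE_log_le F hM)
    _ ≤ 769 / (M : ℝ) ^ 2 := by rw [← add_div]; gcongr; norm_num

end FiniteField

/-- Mertens' estimate for function fields:
`-∑_{deg P ≤ M} ln(1 - 1/|P|) = ln M + γ + 1/(2M) + O(1/M²)`. -/
theorem mertens_function_field (Fq : Type) [Field Fq] [Fintype Fq]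
    (q : ℕ) (hq : Fintype.card Fq = q) :
    ∃ C : ℝ, 0 < C ∧ ∃ M0 : ℕ, ∀ M : ℕ, M0 ≤ M →
      |(-∑ᶠ P ∈ {P : Polynomial Fq | P.Monic ∧ Irreducible P ∧ P.natDegree ≤ M},
            Real.log (1 - 1 / (q : ℝ) ^ P.natDegree))
          - (Real.log M + Real.eulerMascheroniConstant + 1 / (2 * M))|
        ≤ C / M ^ 2 := by
  rw [← hq, ← Nat.card_eq_fintype_card]
  exact ⟨769, by norm_num, 1, fun M hM ↦ mertens_function_field_general Fq (Nat.ne_of_gt hM)⟩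
end

section
/- Smoothed Perron formula: let λ > 0, N a positive integer, and c > 0. For y > 0, with φ(y) = 1 if y > 1 and 0 otherwise, one has 0 ≤ (1/2πi)∫_{c-i∞}^{c+i∞} y^s ((e^{λs}−1)/(λs))^N ds/s − φ(y) ≤ (1/2πi)∫_{c-i∞}^{c+i∞} y^s ((e^{λs}−1)/(λs))^N (1−e^{-λNs})/s ds. -/
open Complex MeasureTheory

/-!
Put `x = 1 / y`. The step function `1_{x < 1}` has Mellin transform `1 / s`, and averaging
`x ↦ f (e⁻ᵛ x)` over `0 ≤ v ≤ λ` multiplies a Mellin transform by `(e^{λs} - 1) / (λs)`. After `N`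
averagings the step has become a continuous function `g` with Mellin transform
`((e^{λs} - 1) / (λs))^N / s`, so Mellin inversion evaluates the two line integrals as `g x` and
`g x - g (e^{λN} x)`. Since `g` takes values in `[0, 1]`, is `1` on `x < 1` and vanishes on
`x ≥ e^{λN}`, it satisfies `g (e^{λN} x) ≤ 1_{x < 1} ≤ g x`, which is the claim.
-/

open Set Filter
open ProbabilityTheory (complexMGF integrableExpSet)

lemma ofReal_exp_cpow (a : ℝ) (s : ℂ) : ((Real.exp a : ℝ) : ℂ) ^ s = cexp (a * s) := by
  rw [cpow_def_of_ne_zero (by exact_mod_cast (Real.exp_pos a).ne'),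
    ← ofReal_log (Real.exp_pos a).le, Real.log_exp]

section MellinTransform

variable {E : Type*} [NormedAddCommGroup E] [NormedSpace ℂ E] {f : ℝ → E} {s : ℂ} {m : E}

lemma integral_norm_cpow_smul_comp_mul_left (f : ℝ → E) (s : ℂ) {a : ℝ} (ha : 0 < a) :
    ∫ x : ℝ in Ioi 0, ‖(x : ℂ) ^ (s - 1) • f (a * x)‖ =
      a ^ (-s.re) * ∫ x : ℝ in Ioi 0, ‖(x : ℂ) ^ (s - 1) • f x‖ := by
  have hscale : ∀ x ∈ Ioi (0 : ℝ), ‖(x : ℂ) ^ (s - 1) • f (a * x)‖ =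
      a ^ (1 - s.re) * ‖((a * x : ℝ) : ℂ) ^ (s - 1) • f (a * x)‖ := by
    intro x hx
    rw [norm_smul, norm_smul, norm_cpow_eq_rpow_re_of_pos hx,
      norm_cpow_eq_rpow_re_of_pos (mul_pos ha hx), Real.mul_rpow ha.le (le_of_lt hx), sub_re,
      one_re, ← neg_sub 1 s.re, Real.rpow_neg ha.le]
    field_simp
  rw [setIntegral_congr_fun measurableSet_Ioi hscale, integral_const_mul,
    integral_comp_mul_left_Ioi (fun x : ℝ ↦ ‖(x : ℂ) ^ (s - 1) • f x‖) 0 ha, mul_zero, smul_eq_mul,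
    ← mul_assoc, sub_eq_neg_add, Real.rpow_add_one ha.ne', mul_inv_cancel_right₀ ha.ne']

theorem hasMellin_comp_mul_left (hf : HasMellin f s m) {a : ℝ} (ha : 0 < a) :
    HasMellin (fun x ↦ f (a * x)) s ((a : ℂ) ^ (-s) • m) :=
  ⟨(MellinConvergent.comp_mul_left ha).2 hf.1, by rw [mellin_comp_mul_left f s ha, hf.2]⟩

lemma integrable_prod_cpow_smul_comp_exp_neg_mul {ν : Measure ℝ} [SFinite ν]
    (hfm : StronglyMeasurable f) (hf : MellinConvergent f s) (hν : s.re ∈ integrableExpSet id ν) :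
    Integrable (fun z : ℝ × ℝ ↦ (z.1 : ℂ) ^ (s - 1) • f (Real.exp (-z.2) * z.1))
      ((volume.restrict (Ioi 0)).prod ν) := by
  have hmeas : StronglyMeasurable
      fun z : ℝ × ℝ ↦ (z.1 : ℂ) ^ (s - 1) • f (Real.exp (-z.2) * z.1) :=
    (Measurable.stronglyMeasurable (by fun_prop)).smul (hfm.comp_measurable (by fun_prop))
  refine (integrable_prod_iff' hmeas.aestronglyMeasurable).2 ⟨.of_forall fun v ↦
    (MellinConvergent.comp_mul_left (Real.exp_pos (-v))).2 hf, ?_⟩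
  simp only [integral_norm_cpow_smul_comp_mul_left f s (Real.exp_pos _), ← Real.exp_mul]
  refine Integrable.mul_const (hν.congr (.of_forall fun v ↦ ?_)) _
  simp [mul_comm v]

theorem hasMellin_integral_comp_exp_neg_mul [CompleteSpace E] {ν : Measure ℝ} [SFinite ν]
    (hfm : StronglyMeasurable f) (hf : HasMellin f s m) (hν : s.re ∈ integrableExpSet id ν) :
    HasMellin (fun x ↦ ∫ v, f (Real.exp (-v) * x) ∂ν) s (complexMGF id ν s • m) := by
  have hint := integrable_prod_cpow_smul_comp_exp_neg_mul hfm hf.1 hν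
  have hdilate (v : ℝ) : mellin (fun x ↦ f (Real.exp (-v) * x)) s = cexp (s * v) • m := by
    rw [(hasMellin_comp_mul_left hf (Real.exp_pos _)).2, ofReal_exp_cpow, ofReal_neg, neg_mul_neg,
      mul_comm]
  constructor
  · simpa only [MellinConvergent, IntegrableOn, integral_smul] using hint.integral_prod_left
  · calc mellin (fun x ↦ ∫ v, f (Real.exp (-v) * x) ∂ν) s
        = ∫ v, mellin (fun x ↦ f (Real.exp (-v) * x)) s ∂ν := by
          simp only [mellin, ← integral_smul]
          exact integral_integral_swap hint
      _ = complexMGF id ν s • m := by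
          simp only [hdilate, complexMGF, id_eq, integral_smul_const]

theorem mellinInv_eq_of_hasMellin [CompleteSpace E] {F : ℂ → E} {σ x : ℝ} (hx : 0 < x)
    (hf : ∀ s : ℂ, s.re = σ → HasMellin f s (F s)) (hF : VerticalIntegrable F σ)
    (hfx : ContinuousAt f x) : mellinInv σ F x = f x := by
  have hline (u : ℝ) : mellin f (σ + u * I) = F (σ + u * I) := (hf _ (by simp)).2
  have hinversion := mellinInv_mellin_eq σ f hx (hf σ (ofReal_re σ)).1
    (by simpa only [VerticalIntegrable, hline] using hF) hfx
  simpa only [mellinInv, hline] using hinversion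

lemma mellinInv_inv_eq (σ : ℝ) (F : ℂ → E) {y : ℝ} (hy : 0 ≤ y) :
    mellinInv σ F y⁻¹ =
      (1 / (2 * Real.pi)) • ∫ u : ℝ, (y : ℂ) ^ (σ + u * I) • F (σ + u * I) := by
  have harg : arg y ≠ Real.pi := by simp [arg_ofReal_of_nonneg hy, Real.pi_ne_zero.symm]
  have hcpow (s : ℂ) : ((y⁻¹ : ℝ) : ℂ) ^ (-s) = (y : ℂ) ^ s := by
    rw [ofReal_inv, cpow_neg, inv_cpow _ _ harg, inv_inv]
  simp only [mellinInv, hcpow]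

end MellinTransform

section LogMean

variable {E : Type*} [NormedAddCommGroup E]

/-- The average of the dilates `x ↦ f (exp (-v) * x)` over `v` between `0` and `h`, that is, of `f`
over `[exp (-h) * x, x]` with respect to the multiplicative Haar measure `dx / x`; it smooths the
step function. -/
noncomputable def logMean [NormedSpace ℝ E] (h : ℝ) (f : ℝ → E) (x : ℝ) : E :=
  ⨍ v in 0..h, f (Real.exp (-v) * x)

/-- The average of `exp (v * s)` over `v` between `0` and `h`, the factor by which `logMean h`
multiplies Mellin transforms. The closed form is used as the definition, so the value at `s = 0` is
`0` rather than the average `1`. -/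
noncomputable def expMean (h : ℝ) (s : ℂ) : ℂ := (cexp (h * s) - 1) / (h * s)

lemma complexMGF_id_average_uIoc (h : ℝ) {s : ℂ} (hs : s ≠ 0) :
    complexMGF id ((volume.restrict (uIoc 0 h) univ)⁻¹ • volume.restrict (uIoc 0 h)) s =
      expMean h s := by
  change ⨍ v in 0..h, cexp (s * v) = _
  rw [interval_average_eq, integral_exp_mul_complex hs, expMean, sub_zero, ofReal_zero, mul_zero,
    exp_zero, real_smul, ofReal_inv, mul_comm s]
  ring

theorem hasMellin_logMean [NormedSpace ℂ E] [CompleteSpace E] {f : ℝ → E} {s : ℂ} {m : E} (h : ℝ)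
    (hs : s ≠ 0) (hfm : StronglyMeasurable f) (hf : HasMellin f s m) :
    HasMellin (logMean h f) s (expMean h s • m) := by
  rw [← complexMGF_id_average_uIoc h hs]
  refine hasMellin_integral_comp_exp_neg_mul hfm hf (Integrable.to_average ?_)
  exact (Continuous.integrableOn_uIcc (by fun_prop)).mono_set uIoc_subset_uIcc

variable [NormedSpace ℝ E] {f : ℝ → E} {h x : ℝ}

lemma stronglyMeasurable_logMean (h : ℝ) (hf : StronglyMeasurable f) :
    StronglyMeasurable (logMean h f) :=
  (hf.comp_measurable
    (by fun_prop : Measurable fun z : ℝ × ℝ ↦ Real.exp (-z.2) * z.1)).integral_prod_right'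

lemma ofReal_logMean (h : ℝ) (f : ℝ → ℝ) :
    (fun x ↦ ((logMean h f x : ℝ) : ℂ)) = logMean h fun x ↦ (f x : ℂ) :=
  funext fun _ ↦ integral_ofReal.symm

lemma logMean_mem [CompleteSpace E] {S : Set E} (hS : Convex ℝ S) (hSc : IsCompact S) (hh : 0 < h)
    (hf : StronglyMeasurable f) (hmem : ∀ v ∈ Ioc 0 h, f (Real.exp (-v) * x) ∈ S) :
    logMean h f x ∈ S := by
  obtain ⟨C, hC⟩ := hSc.isBounded.exists_norm_le
  have hmem_ae : ∀ᵐ v ∂volume.restrict (Ioc 0 h), f (Real.exp (-v) * x) ∈ S :=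
    ae_restrict_of_forall_mem measurableSet_Ioc hmem
  have hint : IntegrableOn (fun v ↦ f (Real.exp (-v) * x)) (Ioc 0 h) :=
    Measure.integrableOn_of_bounded (by simp)
      (hf.comp_measurable (by fun_prop)).aestronglyMeasurable (hmem_ae.mono fun v ↦ hC _)
  rw [logMean, uIoc_of_le hh.le]
  exact hS.set_average_mem hSc.isClosed (by simp [hh]) (by simp) hmem_ae hint

lemma logMean_eq_integral_comp_exp (h : ℝ) (f : ℝ → E) (hx : 0 < x) :
    logMean h f x = h⁻¹ • ∫ w in (Real.log x - h)..Real.log x, f (Real.exp w) := by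
  have hexp (v : ℝ) : Real.exp (-v) * x = Real.exp (Real.log x - v) := by
    rw [Real.exp_sub, Real.exp_log hx, Real.exp_neg, inv_mul_eq_div]
  simp only [logMean, interval_average_eq, hexp, sub_zero,
    intervalIntegral.integral_comp_sub_left fun w ↦ f (Real.exp w)]

theorem continuousAt_logMean (h : ℝ)
    (hf : ∀ a b, IntervalIntegrable (fun w ↦ f (Real.exp w)) volume a b) (hx : 0 < x) :
    ContinuousAt (logMean h f) x := by
  have hprim := intervalIntegral.continuous_primitive hf 0
  have hmean : logMean h f =ᶠ[nhds x] fun x ↦ h⁻¹ • ((∫ w in 0..Real.log x, f (Real.exp w)) -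
      ∫ w in 0..(Real.log x - h), f (Real.exp w)) := by
    filter_upwards [eventually_gt_nhds hx] with x hx
    rw [logMean_eq_integral_comp_exp h f hx,
      intervalIntegral.integral_interval_sub_left (hf _ _) (hf _ _)]
  have hlog := Real.continuousAt_log hx.ne'
  exact ContinuousAt.congr (((hprim.continuousAt.comp hlog).sub
    (hprim.continuousAt.comp (hlog.sub continuousAt_const))).const_smul _) hmean.symm

end LogMean

section SmoothedStep

variable {h x : ℝ} {n : ℕ}

/-- The function on `(0, ∞)` with Mellin transform `expMean h s ^ n / s`: the step function
`1_{x < 1}` averaged `n` times. In the variable `y = 1 / x` of Perron's formula the step is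
`1_{y > 1}`. -/
noncomputable def smoothedStep (h : ℝ) (n : ℕ) : ℝ → ℝ :=
  (logMean h)^[n] ((Iio 1).indicator 1)

lemma smoothedStep_succ (h : ℝ) (n : ℕ) :
    smoothedStep h (n + 1) = logMean h (smoothedStep h n) :=
  Function.iterate_succ_apply' _ _ _

lemma measurable_smoothedStep (h : ℝ) (n : ℕ) : Measurable (smoothedStep h n) := by
  induction n with
  | zero => exact measurable_one.indicator measurableSet_Iio
  | succ n ih =>
    rw [smoothedStep_succ]
    exact (stronglyMeasurable_logMean h ih.stronglyMeasurable).measurable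

lemma smoothedStep_mem_Icc (hh : 0 < h) (n : ℕ) (x : ℝ) : smoothedStep h n x ∈ Icc 0 1 := by
  induction n generalizing x with
  | zero => by_cases hx : x < 1 <;> simp [smoothedStep, hx]
  | succ n ih =>
    rw [smoothedStep_succ]
    exact logMean_mem (convex_Icc 0 1) isCompact_Icc hh
      (measurable_smoothedStep h n).stronglyMeasurable fun v _ ↦ ih _

lemma smoothedStep_eq_one (hh : 0 < h) (n : ℕ) (hx : x < 1) : smoothedStep h n x = 1 := by
  induction n generalizing x with
  | zero => simp [smoothedStep, hx]
  | succ n ih =>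
    rw [smoothedStep_succ, ← mem_singleton_iff]
    refine logMean_mem (convex_singleton 1) isCompact_singleton hh
      (measurable_smoothedStep h n).stronglyMeasurable fun v hv ↦ ih ?_
    have hexp : Real.exp (-v) < 1 := by simpa using hv.1
    nlinarith [Real.exp_pos (-v)]

lemma smoothedStep_eq_zero (hh : 0 < h) (hx : Real.exp (h * n) ≤ x) : smoothedStep h n x = 0 := by
  induction n generalizing x with
  | zero => simpa [smoothedStep] using hx
  | succ n ih =>
    rw [smoothedStep_succ, ← mem_singleton_iff]
    refine logMean_mem (convex_singleton 0) isCompact_singleton hh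
      (measurable_smoothedStep h n).stronglyMeasurable fun v hv ↦ ih ?_
    calc Real.exp (h * n) ≤ Real.exp (-v) * Real.exp (h * (n + 1 : ℕ)) := by
          rw [← Real.exp_add, Real.exp_le_exp]
          push_cast
          linarith [hv.2]
      _ ≤ Real.exp (-v) * x := by gcongr

lemma indicator_Iio_le_smoothedStep (hh : 0 < h) (n : ℕ) (x : ℝ) :
    (Iio 1).indicator 1 x ≤ smoothedStep h n x :=
  indicator_le' (fun _ hx ↦ (smoothedStep_eq_one hh n hx).ge)
    (fun x _ ↦ (smoothedStep_mem_Icc hh n x).1) x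

lemma smoothedStep_exp_mul_le_indicator_Iio (hh : 0 < h) (n : ℕ) (x : ℝ) :
    smoothedStep h n (Real.exp (h * n) * x) ≤ (Iio 1).indicator 1 x := by
  by_cases hx : x < 1
  · simpa [hx] using (smoothedStep_mem_Icc hh n _).2
  · rw [smoothedStep_eq_zero hh (le_mul_of_one_le_right (Real.exp_pos _).le (not_lt.mp hx))]
    simp [hx]

lemma continuousAt_smoothedStep (hh : 0 < h) (hn : n ≠ 0) (hx : 0 < x) :
    ContinuousAt (smoothedStep h n) x := by
  obtain ⟨n, rfl⟩ := Nat.exists_eq_add_one_of_ne_zero hn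
  rw [smoothedStep_succ]
  refine continuousAt_logMean h (fun a b ↦ ?_) hx
  refine (intervalIntegrable_const (c := (1 : ℝ))).mono_fun
    ((measurable_smoothedStep h n).comp Real.measurable_exp).aestronglyMeasurable
    (.of_forall fun w ↦ ?_)
  obtain ⟨hnonneg, hle⟩ := smoothedStep_mem_Icc hh n (Real.exp w)
  simpa [abs_of_nonneg hnonneg] using hle

lemma hasMellin_indicator_Iio {s : ℂ} (hs : 0 < s.re) :
    HasMellin (fun x ↦ (((Iio 1).indicator 1 x : ℝ) : ℂ)) s (1 / s) := by
  have hae : ∀ᵐ x : ℝ ∂volume.restrict (Ioi 0),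
      (x : ℂ) ^ (s - 1) • (Ioc 0 1).indicator (fun _ ↦ (1 : ℂ)) x =
        (x : ℂ) ^ (s - 1) • (((Iio 1).indicator 1 x : ℝ) : ℂ) := by
    filter_upwards [ae_restrict_mem measurableSet_Ioi, Measure.ae_ne _ 1] with x hx0 hx1
    rw [mem_Ioi] at hx0
    rcases lt_or_gt_of_ne hx1 with hx | hx
    · simp [hx0, hx, hx.le]
    · simp [hx.not_ge, hx.not_gt]
  obtain ⟨hconv, hmellin⟩ := hasMellin_one_Ioc hs
  exact ⟨hconv.congr hae, (integral_congr_ae hae).symm.trans hmellin⟩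

theorem hasMellin_smoothedStep (h : ℝ) (n : ℕ) {s : ℂ} (hs : 0 < s.re) :
    HasMellin (fun x ↦ (smoothedStep h n x : ℂ)) s (expMean h s ^ n / s) := by
  induction n with
  | zero => simpa [smoothedStep] using hasMellin_indicator_Iio hs
  | succ n ih =>
    have hs0 : s ≠ 0 := by rintro rfl; simp at hs
    simp only [smoothedStep_succ, ofReal_logMean, pow_succ', mul_div_assoc]
    exact hasMellin_logMean h hs0 (measurable_smoothedStep h n).complex_ofReal.stronglyMeasurable ih

end SmoothedStep

section VerticalLine

variable {σ : ℝ}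

theorem verticalIntegrable_inv_sq (hσ : σ ≠ 0) : VerticalIntegrable (fun s ↦ (s ^ 2)⁻¹) σ := by
  have hmajorant : Integrable fun u : ℝ ↦ (σ ^ 2)⁻¹ * (1 + (u / σ) ^ 2)⁻¹ :=
    (integrable_inv_one_add_sq.comp_div hσ).const_mul _
  refine hmajorant.mono' (Measurable.aestronglyMeasurable (by fun_prop)) (.of_forall fun u ↦ ?_)
  rw [norm_inv, norm_pow, ← normSq_eq_norm_sq, normSq_add_mul_I, ← mul_inv]
  exact le_of_eq (by field_simp)

lemma verticalIntegrable_mul_of_norm_le {f g : ℂ → ℂ} (C : ℝ) (hf : VerticalIntegrable f σ)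
    (hg : Measurable g) (hC : ∀ s, s.re = σ → ‖g s‖ ≤ C) :
    VerticalIntegrable (fun s ↦ g s * f s) σ :=
  hf.bdd_mul (hg.comp (by fun_prop)).aestronglyMeasurable (.of_forall fun _ ↦ hC _ (by simp))

lemma measurable_expMean (h : ℝ) : Measurable (expMean h) := by
  unfold expMean
  fun_prop

lemma norm_cexp_sub_one_le (h : ℝ) (s : ℂ) : ‖cexp (h * s) - 1‖ ≤ Real.exp (h * s.re) + 1 := by
  simpa [norm_exp] using norm_sub_le (cexp (h * s)) 1

lemma norm_expMean_le (h : ℝ) {s : ℂ} (hs : s.re ≠ 0) :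
    ‖expMean h s‖ ≤ (Real.exp (h * s.re) + 1) * (|h| * |s.re|)⁻¹ := by
  rw [expMean, norm_div, norm_mul, norm_real, Real.norm_eq_abs, div_eq_mul_inv, mul_inv, mul_inv]
  gcongr
  · exact norm_cexp_sub_one_le h s
  · exact abs_re_le_norm s

theorem verticalIntegrable_expMean_pow_div (h : ℝ) {n : ℕ} (hn : n ≠ 0) (hσ : σ ≠ 0) :
    VerticalIntegrable (fun s ↦ expMean h s ^ n / s) σ := by
  obtain ⟨n, rfl⟩ := Nat.exists_eq_add_one_of_ne_zero hn
  have hfactor (s : ℂ) : expMean h s ^ (n + 1) / s =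
      expMean h s ^ n * ((cexp (h * s) - 1) / h * (s ^ 2)⁻¹) := by
    rw [pow_succ, expMean]; ring
  simp only [hfactor]
  refine verticalIntegrable_mul_of_norm_le (((Real.exp (h * σ) + 1) * (|h| * |σ|)⁻¹) ^ n) ?_
    ((measurable_expMean h).pow_const n) ?_
  · refine verticalIntegrable_mul_of_norm_le ((Real.exp (h * σ) + 1) / |h|)
      (verticalIntegrable_inv_sq hσ) (by fun_prop) ?_
    rintro s rfl
    rw [norm_div, norm_real, Real.norm_eq_abs]
    gcongr
    exact norm_cexp_sub_one_le h s
  · rintro s rfl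
    rw [norm_pow]
    gcongr
    exact norm_expMean_le h hσ

end VerticalLine

section Perron

variable {h σ x : ℝ} {n : ℕ}

theorem mellinInv_expMean_pow_div (hh : 0 < h) (hn : n ≠ 0) (hσ : 0 < σ) (hx : 0 < x) :
    mellinInv σ (fun s ↦ expMean h s ^ n / s) x = (smoothedStep h n x : ℂ) :=
  mellinInv_eq_of_hasMellin hx (fun _ hs ↦ hasMellin_smoothedStep h n (hs ▸ hσ))
    (verticalIntegrable_expMean_pow_div h hn hσ.ne')
    (continuous_ofReal.continuousAt.comp (continuousAt_smoothedStep hh hn hx))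

lemma hasMellin_smoothedStep_sub_comp_mul_left (a h : ℝ) (n : ℕ) {s : ℂ} (hs : 0 < s.re) :
    HasMellin (fun x ↦ (smoothedStep h n x : ℂ) - smoothedStep h n (Real.exp a * x)) s
      (expMean h s ^ n * (1 - cexp (-a * s)) / s) := by
  have hstep := hasMellin_smoothedStep h n hs
  have hdilate := hasMellin_comp_mul_left hstep (Real.exp_pos a)
  have hsub := hasMellin_sub hstep.1 hdilate.1
  rw [hstep.2, hdilate.2, ofReal_exp_cpow, mul_neg, ← neg_mul, smul_eq_mul] at hsub
  convert hsub using 1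
  ring

lemma verticalIntegrable_expMean_pow_mul_one_sub_exp_div (a h : ℝ) (hn : n ≠ 0) (hσ : σ ≠ 0) :
    VerticalIntegrable (fun s ↦ expMean h s ^ n * (1 - cexp (-a * s)) / s) σ := by
  have hfactor (s : ℂ) : expMean h s ^ n * (1 - cexp (-a * s)) / s =
      (1 - cexp (-a * s)) * (expMean h s ^ n / s) := by ring
  simp only [hfactor]
  refine verticalIntegrable_mul_of_norm_le (Real.exp (-a * σ) + 1)
    (verticalIntegrable_expMean_pow_div h hn hσ) (by fun_prop) ?_
  rintro s rfl
  simpa [norm_sub_rev] using norm_cexp_sub_one_le (-a) s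

theorem mellinInv_expMean_pow_mul_one_sub_exp_div (a : ℝ) (hh : 0 < h) (hn : n ≠ 0) (hσ : 0 < σ)
    (hx : 0 < x) :
    mellinInv σ (fun s ↦ expMean h s ^ n * (1 - cexp (-a * s)) / s) x =
      smoothedStep h n x - smoothedStep h n (Real.exp a * x) := by
  have hcont {x : ℝ} (hx : 0 < x) : ContinuousAt (fun x ↦ (smoothedStep h n x : ℂ)) x :=
    continuous_ofReal.continuousAt.comp (continuousAt_smoothedStep hh hn hx)
  have hcont_dilate : ContinuousAt (fun x ↦ (smoothedStep h n (Real.exp a * x) : ℂ)) x :=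
    (hcont (by positivity)).comp (f := fun x ↦ Real.exp a * x) (by fun_prop)
  exact mellinInv_eq_of_hasMellin hx
    (fun s hs ↦ hasMellin_smoothedStep_sub_comp_mul_left a h n (hs ▸ hσ))
    (verticalIntegrable_expMean_pow_mul_one_sub_exp_div a h hn hσ.ne')
    ((hcont hx).sub hcont_dilate)

end Perron

/-- Smoothed Perron formula: for `λ > 0`, `N ≥ 1`, `c > 0` and `y > 0`, with
`φ(y) = 1` for `y > 1` and `0` otherwise,
`0 ≤ (1/2πi)∫_{(c)} y^s ((e^{λs}−1)/(λs))^N ds/s − φ(y)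
   ≤ (1/2πi)∫_{(c)} y^s ((e^{λs}−1)/(λs))^N (1−e^{−λNs})/s ds`
(the line integrals being real-valued). -/
theorem smoothed_perron (lam : ℝ) (hlam : 0 < lam) (N : ℕ) (hN : 1 ≤ N)
    (c : ℝ) (hc : 0 < c) (y : ℝ) (hy : 0 < y) :
    ∀ I1 I2 : ℂ,
      I1 = (1 / (2 * Real.pi) : ℂ) * ∫ u : ℝ,
          (y : ℂ) ^ ((c : ℂ) + (u : ℂ) * I)
            * ((Complex.exp ((lam : ℂ) * ((c : ℂ) + (u : ℂ) * I)) - 1)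
                / ((lam : ℂ) * ((c : ℂ) + (u : ℂ) * I))) ^ N
            / ((c : ℂ) + (u : ℂ) * I) →
      I2 = (1 / (2 * Real.pi) : ℂ) * ∫ u : ℝ,
          (y : ℂ) ^ ((c : ℂ) + (u : ℂ) * I)
            * ((Complex.exp ((lam : ℂ) * ((c : ℂ) + (u : ℂ) * I)) - 1)
                / ((lam : ℂ) * ((c : ℂ) + (u : ℂ) * I))) ^ N
            * (1 - Complex.exp (-(lam : ℂ) * (N : ℂ) * ((c : ℂ) + (u : ℂ) * I)))
            / ((c : ℂ) + (u : ℂ) * I) →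
      I1.im = 0 ∧ I2.im = 0 ∧
        0 ≤ I1.re - (if 1 < y then (1 : ℝ) else 0) ∧
        I1.re - (if 1 < y then (1 : ℝ) else 0) ≤ I2.re := by
  intro I1 I2 hI1 hI2
  have hx : 0 < y⁻¹ := inv_pos.2 hy
  have hN0 : N ≠ 0 := Nat.one_le_iff_ne_zero.1 hN
  have hφ : (if 1 < y then (1 : ℝ) else 0) = (Iio 1).indicator 1 y⁻¹ := by
    simp [indicator_apply, inv_lt_one₀ hy]
  have hI1_eq : I1 = (smoothedStep lam N y⁻¹ : ℂ) := by
    rw [hI1, ← mellinInv_expMean_pow_div hlam hN0 hc hx, mellinInv_inv_eq c _ hy.le]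
    simp [expMean, mul_div_assoc]
  have hI2_eq : I2 =
      ((smoothedStep lam N y⁻¹ - smoothedStep lam N (Real.exp (lam * N) * y⁻¹) : ℝ) : ℂ) := by
    rw [hI2, ofReal_sub, ← mellinInv_expMean_pow_mul_one_sub_exp_div (lam * N) hlam hN0 hc hx,
      mellinInv_inv_eq c _ hy.le]
    simp [expMean, mul_div_assoc, mul_assoc]
  rw [hφ, hI1_eq, hI2_eq]
  simp only [ofReal_im, ofReal_re, sub_nonneg, sub_le_sub_iff_left, true_and]
  exact ⟨indicator_Iio_le_smoothedStep hlam N y⁻¹,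
    smoothedStep_exp_mul_le_indicator_Iio hlam N y⁻¹⟩
end
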